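/- Let (Ω, μ) be a measure space and let p : Ω × I → ℝ be a family of probability densities indexed by an open interval I ⊆ ℝ, so that p(ω, θ) ≥ 0 and ∫ p(ω, θ) dμ(ω) = 1 for each θ ∈ I. Fix θ₀ ∈ I and assume: (i) for μ-a.e. ω, θ ↦ p(ω, θ) is differentiable at θ₀ with derivative ∂θp(ω, θ₀); (ii) T : Ω → ℝ is an unbiased estimator in the sense that ∫ T(ω) p(ω, θ) dμ(ω) = θ for all θ ∈ I, and differentiation under the integral is valid so that ∫ ∂θp(ω, θ₀) dμ(ω) = 0 and ∫ T(ω) ∂θp(ω, θ₀) dμ(ω) = 1; (iii) the Fisher information Iₓ(θ₀) = ∫ (∂θp(ω, θ₀))² / p(ω, θ₀) dμ(ω) (with the integrand taken as 0 where p(ω, θ₀) = 0) is finite and positive, and T² p(·, θ₀) is integrable. Then the variance of T under the density p(·, θ₀) satisfies Var_{θ₀}(T) = ∫ (T(ω) − θ₀)² p(ω, θ₀) dμ(ω) ≥ 1 / Iₓ(θ₀). -/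

import Mathlib

open MeasureTheory

/-! At `θ₀` the Cauchy–Schwarz inequality is applied to `(T - c) √p` and `∂p / √p`, whose product is
`(T - c) ∂p`. Since `∫ ∂p = 0`, the integral of this product does not depend on the constant `c`.
The factorisation is legitimate where `p = 0` because a nonnegative function has zero derivative
at a zero. -/

open Filter Topology

section CauchySchwarz

variable {Ω : Type*} [MeasurableSpace Ω] {μ : Measure Ω} {f g h u v w : Ω → ℝ}

theorem memLp_two_sqrt (hu : Integrable u μ) (hu_nonneg : 0 ≤ᵐ[μ] u) :
    MemLp (fun ω => √(u ω)) 2 μ := by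
  have hmeas : AEStronglyMeasurable (fun ω => √(u ω)) μ :=
    Real.continuous_sqrt.comp_aestronglyMeasurable hu.aestronglyMeasurable
  refine (memLp_two_iff_integrable_sq hmeas).2 (hu.congr ?_)
  filter_upwards [hu_nonneg] with ω hω using (Real.sq_sqrt hω).symm

theorem ae_norm_le_sqrt_mul_sqrt_of_sq_le_mul (hu_nonneg : 0 ≤ᵐ[μ] u)
    (hle : ∀ᵐ ω ∂μ, h ω ^ 2 ≤ u ω * v ω) : ∀ᵐ ω ∂μ, ‖h ω‖ ≤ √(u ω) * √(v ω) := by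
  filter_upwards [hu_nonneg, hle] with ω hu hω
  simpa only [Real.norm_eq_abs, Real.sqrt_mul hu] using Real.abs_le_sqrt hω

theorem integrable_of_sq_le_mul (hu : Integrable u μ) (hv : Integrable v μ)
    (hu_nonneg : 0 ≤ᵐ[μ] u) (hv_nonneg : 0 ≤ᵐ[μ] v) (hh : AEStronglyMeasurable h μ)
    (hle : ∀ᵐ ω ∂μ, h ω ^ 2 ≤ u ω * v ω) : Integrable h μ :=
  ((memLp_two_sqrt hu hu_nonneg).integrable_mul (memLp_two_sqrt hv hv_nonneg)).mono' hh
    (ae_norm_le_sqrt_mul_sqrt_of_sq_le_mul hu_nonneg hle)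

theorem sq_integral_le_integral_mul_integral (hu : Integrable u μ) (hv : Integrable v μ)
    (hu_nonneg : 0 ≤ᵐ[μ] u) (hv_nonneg : 0 ≤ᵐ[μ] v)
    (hle : ∀ᵐ ω ∂μ, h ω ^ 2 ≤ u ω * v ω) :
    (∫ ω, h ω ∂μ) ^ 2 ≤ (∫ ω, u ω ∂μ) * ∫ ω, v ω ∂μ := by
  have hu₂ := memLp_two_sqrt hu hu_nonneg
  have hv₂ := memLp_two_sqrt hv hv_nonneg
  have integral_sqrt_sq {x : Ω → ℝ} (hx : 0 ≤ᵐ[μ] x) :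
      ∫ ω, √(x ω) ^ (2 : ℝ) ∂μ = ∫ ω, x ω ∂μ :=
    integral_congr_ae <| hx.mono fun ω hω => by
      simp only [Real.rpow_two, Real.sq_sqrt hω]
  have norm_le : ‖∫ ω, h ω ∂μ‖ ≤ √(∫ ω, u ω ∂μ) * √(∫ ω, v ω ∂μ) := calc
    ‖∫ ω, h ω ∂μ‖ ≤ ∫ ω, √(u ω) * √(v ω) ∂μ :=
      norm_integral_le_of_norm_le (hu₂.integrable_mul hv₂)
        (ae_norm_le_sqrt_mul_sqrt_of_sq_le_mul hu_nonneg hle)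
    _ ≤ (∫ ω, √(u ω) ^ (2 : ℝ) ∂μ) ^ (1 / 2 : ℝ) * (∫ ω, √(v ω) ^ (2 : ℝ) ∂μ) ^ (1 / 2 : ℝ) :=
      integral_mul_le_Lp_mul_Lq_of_nonneg .two_two
        (.of_forall fun _ => Real.sqrt_nonneg _) (.of_forall fun _ => Real.sqrt_nonneg _)
        (by simpa using hu₂) (by simpa using hv₂)
    _ = √(∫ ω, u ω ∂μ) * √(∫ ω, v ω ∂μ) := by
      rw [integral_sqrt_sq hu_nonneg, integral_sqrt_sq hv_nonneg, Real.sqrt_eq_rpow,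
        Real.sqrt_eq_rpow]
  have integral_u_nonneg := integral_nonneg_of_ae hu_nonneg
  rw [← Real.sqrt_mul integral_u_nonneg] at norm_le
  exact (Real.sq_le (mul_nonneg integral_u_nonneg (integral_nonneg_of_ae hv_nonneg))).2
    (abs_le.1 norm_le)

theorem integrable_of_integrable_sq_div (hw : Integrable w μ) (hw_nonneg : 0 ≤ᵐ[μ] w)
    (hg : AEStronglyMeasurable g μ) (hg_zero : ∀ᵐ ω ∂μ, w ω = 0 → g ω = 0)
    (hg_sq : Integrable (fun ω => g ω ^ 2 / w ω) μ) : Integrable g μ := by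
  refine integrable_of_sq_le_mul hw hg_sq hw_nonneg
    (hw_nonneg.mono fun _ hω => div_nonneg (sq_nonneg _) hω) hg ?_
  filter_upwards [hg_zero] with ω hω
  exact (mul_div_cancel_of_imp' fun h₀ => by simp [hω h₀]).ge

theorem sq_integral_mul_le_integral_sq_mul_mul_integral_sq_div (hw_nonneg : 0 ≤ᵐ[μ] w)
    (hg_zero : ∀ᵐ ω ∂μ, w ω = 0 → g ω = 0)
    (hf_sq : Integrable (fun ω => f ω ^ 2 * w ω) μ)
    (hg_sq : Integrable (fun ω => g ω ^ 2 / w ω) μ) :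
    (∫ ω, f ω * g ω ∂μ) ^ 2 ≤ (∫ ω, f ω ^ 2 * w ω ∂μ) * ∫ ω, g ω ^ 2 / w ω ∂μ := by
  refine sq_integral_le_integral_mul_integral hf_sq hg_sq
    (hw_nonneg.mono fun _ hω => mul_nonneg (sq_nonneg _) hω)
    (hw_nonneg.mono fun _ hω => div_nonneg (sq_nonneg _) hω) ?_
  filter_upwards [hg_zero] with ω hω
  rw [mul_assoc, mul_div_cancel_of_imp' fun h₀ => by simp [hω h₀], mul_pow]

end CauchySchwarz

theorem aestronglyMeasurable_of_hasDerivAt {Ω 𝕜 E : Type*} [MeasurableSpace Ω] {μ : Measure Ω}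
    [NontriviallyNormedField 𝕜] [NormedAddCommGroup E] [NormedSpace 𝕜 E]
    {p : Ω → 𝕜 → E} {dp : Ω → E} {θ₀ : 𝕜}
    (hp : ∀ᶠ θ in 𝓝 θ₀, AEStronglyMeasurable (fun ω => p ω θ) μ)
    (hdp : ∀ᵐ ω ∂μ, HasDerivAt (p ω) (dp ω) θ₀) : AEStronglyMeasurable dp μ := by
  obtain ⟨θ, hθ, hp_θ⟩ := exists_seq_forall_of_frequently
    (hp.filter_mono nhdsWithin_le_nhds : ∀ᶠ θ in 𝓝[≠] θ₀, _).frequently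
  refine aestronglyMeasurable_of_tendsto_ae atTop (f := fun n ω => slope (p ω) θ₀ (θ n))
    (fun n => ((hp_θ n).sub hp.self_of_nhds).const_smul (θ n - θ₀)⁻¹) ?_
  filter_upwards [hdp] with ω hω
  exact hω.tendsto_slope.comp hθ

theorem hasDerivAt_eq_zero_of_eventually_nonneg {f : ℝ → ℝ} {f' x : ℝ} (hf : HasDerivAt f f' x)
    (hf_nonneg : ∀ᶠ y in 𝓝 x, 0 ≤ f y) (hx : f x = 0) : f' = 0 :=
  IsLocalMin.hasDerivAt_eq_zero (f := f) (hf_nonneg.mono fun _ hy => hx.trans_le hy) hf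

theorem integrable_sub_sq_mul_of_integral_mul_eq {Ω : Type*} [MeasurableSpace Ω] {μ : Measure Ω}
    {T w : Ω → ℝ} {c : ℝ} (hw : Integrable w μ) (hT_sq : Integrable (fun ω => T ω ^ 2 * w ω) μ)
    (hT_mean : ∫ ω, T ω * w ω ∂μ = c) : Integrable (fun ω => (T ω - c) ^ 2 * w ω) μ := by
  -- When `c = 0` the function `T * w` need not be integrable: `0` is then the junk value.
  have cross_term : Integrable (fun ω => c * (T ω * w ω)) μ := by
    rcases eq_or_ne c 0 with rfl | hc
    · simp
    · exact (Integrable.of_integral_ne_zero (hT_mean.trans_ne hc)).const_mul c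
  refine ((hT_sq.sub (cross_term.const_mul 2)).add (hw.const_mul (c ^ 2))).congr
    (.of_forall fun ω => ?_)
  simp only [Pi.add_apply, Pi.sub_apply]
  ring

theorem cramer_rao_lower_bound_general {Ω : Type*} [MeasurableSpace Ω] {μ : Measure Ω}
    {p : Ω → ℝ → ℝ} {dp T : Ω → ℝ} {θ₀ c : ℝ}
    (hp_nonneg : ∀ᵐ ω ∂μ, ∀ᶠ θ in 𝓝 θ₀, 0 ≤ p ω θ)
    (hp_int : ∀ᶠ θ in 𝓝 θ₀, Integrable (fun ω => p ω θ) μ)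
    (hdp : ∀ᵐ ω ∂μ, HasDerivAt (p ω) (dp ω) θ₀)
    (h_dp_zero : ∫ ω, dp ω ∂μ = 0)
    (hTdp_int : Integrable (fun ω => T ω * dp ω) μ)
    (h_fisher_int : Integrable (fun ω => dp ω ^ 2 / p ω θ₀) μ)
    (hT_sq_int : Integrable (fun ω => (T ω - c) ^ 2 * p ω θ₀) μ) :
    (∫ ω, T ω * dp ω ∂μ) ^ 2 ≤
      (∫ ω, (T ω - c) ^ 2 * p ω θ₀ ∂μ) * ∫ ω, dp ω ^ 2 / p ω θ₀ ∂μ := by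
  have hp₀_nonneg : 0 ≤ᵐ[μ] fun ω => p ω θ₀ := hp_nonneg.mono fun _ hω => hω.self_of_nhds
  have dp_eq_zero : ∀ᵐ ω ∂μ, p ω θ₀ = 0 → dp ω = 0 := by
    filter_upwards [hdp, hp_nonneg] with ω using hasDerivAt_eq_zero_of_eventually_nonneg
  have hdp_int : Integrable dp μ :=
    integrable_of_integrable_sq_div hp_int.self_of_nhds hp₀_nonneg
      (aestronglyMeasurable_of_hasDerivAt (hp_int.mono fun _ hθ => hθ.aestronglyMeasurable) hdp)
      dp_eq_zero h_fisher_int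
  have integral_centred : ∫ ω, (T ω - c) * dp ω ∂μ = ∫ ω, T ω * dp ω ∂μ := by
    simp only [sub_mul]
    rw [integral_sub hTdp_int (hdp_int.const_mul c), integral_const_mul, h_dp_zero, mul_zero,
      sub_zero]
  rw [← integral_centred]
  exact sq_integral_mul_le_integral_sq_mul_mul_integral_sq_div hp₀_nonneg dp_eq_zero
    hT_sq_int h_fisher_int

/-- **Scalar Cramér–Rao lower bound.**
Let `(Ω, μ)` be a measure space and `p : Ω → ℝ → ℝ` a family of probability
densities indexed by an open interval `I ⊆ ℝ` (`p ω θ ≥ 0` and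
`∫ p (·, θ) dμ = 1` for `θ ∈ I`).  Fix `θ₀ ∈ I` and assume:
(i) for `μ`-a.e. `ω`, `θ ↦ p ω θ` is differentiable at `θ₀` with derivative
`dp ω`; (ii) `T` is an unbiased estimator, `∫ T ω * p ω θ dμ = θ` for all
`θ ∈ I`, and differentiation under the integral is valid at `θ₀`:
`∫ dp dμ = 0` and `∫ T * dp dμ = 1`; (iii) the Fisher information
`Iₓ(θ₀) = ∫ (dp ω)² / p ω θ₀ dμ` (the integrand vanishing where `p ω θ₀ = 0`,
as Lean's division by zero yields `0`) is finite (the integrand is integrable)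
and positive, and `T² p (·, θ₀)` is integrable.  Then the variance of `T`
under `p (·, θ₀)` satisfies `∫ (T ω − θ₀)² p ω θ₀ dμ ≥ 1 / Iₓ(θ₀)`. -/
theorem cramer_rao_lower_bound
    {Ω : Type*} [MeasurableSpace Ω] (μ : Measure Ω)
    (I : Set ℝ) (hIopen : IsOpen I) (hIinterval : I.OrdConnected)
    (p : Ω → ℝ → ℝ)
    (hp_nonneg : ∀ ω, ∀ θ ∈ I, 0 ≤ p ω θ)
    (hp_prob : ∀ θ ∈ I, ∫ ω, p ω θ ∂μ = 1)
    (θ₀ : ℝ) (hθ₀ : θ₀ ∈ I)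
    (dp : Ω → ℝ)
    (hdp : ∀ᵐ ω ∂μ, HasDerivAt (fun θ => p ω θ) (dp ω) θ₀)
    (T : Ω → ℝ)
    (hT_unbiased : ∀ θ ∈ I, ∫ ω, T ω * p ω θ ∂μ = θ)
    (h_swap₀ : ∫ ω, dp ω ∂μ = 0)
    (h_swap₁ : ∫ ω, T ω * dp ω ∂μ = 1)
    (h_fisher_int : Integrable (fun ω => (dp ω) ^ 2 / p ω θ₀) μ)
    (h_fisher_pos : 0 < ∫ ω, (dp ω) ^ 2 / p ω θ₀ ∂μ)
    (hT_sq_int : Integrable (fun ω => (T ω) ^ 2 * p ω θ₀) μ) :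
    1 / (∫ ω, (dp ω) ^ 2 / p ω θ₀ ∂μ) ≤ ∫ ω, (T ω - θ₀) ^ 2 * p ω θ₀ ∂μ := by
  have hI : ∀ᶠ θ in 𝓝 θ₀, θ ∈ I := hIopen.mem_nhds hθ₀
  have hp_int : ∀ θ ∈ I, Integrable (fun ω => p ω θ) μ := fun θ hθ =>
    integrable_of_integral_eq_one (hp_prob θ hθ)
  have one_le := cramer_rao_lower_bound_general (.of_forall fun ω => hI.mono (hp_nonneg ω))
    (hI.mono hp_int) hdp h_swap₀ (integrable_of_integral_eq_one h_swap₁) h_fisher_int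
    (integrable_sub_sq_mul_of_integral_mul_eq (hp_int θ₀ hθ₀) hT_sq_int (hT_unbiased θ₀ hθ₀))
  rw [h_swap₁, one_pow] at one_le
  exact (div_le_iff₀ h_fisher_pos).2 one_le
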